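/- (Oracle inequality) Let λ > 0, n ≥ 1, δ ∈ (0,1), α ∈ [0,1], and let P be a fixed prior on H. Define the objective F(Q) = R̂_n^α(π_Q) + √(KL1(π_Q)/(2n)) + B_n^α(π_Q) + KL2(π_Q)/(nλ) + (λ/2)·V̄_n^α(π_Q). Suppose Q̂_n is a probability distribution on H minimizing F over all probability distributions on H, and Q_* is a probability distribution on H minimizing the risk Q ↦ R(π_Q) over all probability distributions on H. Then with probability at least 1−δ over draws of D_n: R(π_{Q̂_n}) ≤ R(π_{Q_*}) + 2√(KL1(π_{Q_*})/(2n)) + 2B_n^α(π_{Q_*}) + 2KL2(π_{Q_*})/(nλ) + λ·V̄_n^α(π_{Q_*}). -/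

import Mathlib

open MeasureTheory ProbabilityTheory Real

open Classical in
/-- Kullback–Leibler divergence between two measures, valued in `ℝ≥0∞` (junk value `⊤` when
`Q` is not absolutely continuous w.r.t. `P` or the log-likelihood ratio is not integrable). -/
noncomputable def klDiv {α : Type*} [MeasurableSpace α] (Q P : Measure α) : ENNReal :=
  if Q ≪ P ∧ Integrable (llr Q P) Q then ENNReal.ofReal (∫ x, llr Q P x ∂Q) else ⊤

/-!
The distance from the risk of `π_Q` to its estimate `R̂_n^α` is bounded, with probability at least
`1 - δ` and for all posteriors `Q` at once, by the penalty in the objective `F`; comparing the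
minimizer `Q̂_n` with any other posterior then costs this penalty twice. The distance splits into
three parts. Averaging over the contexts is a PAC-Bayes bound for the squared deviation. Smoothing
the importance weights introduces a bias, bounded deterministically by `B_n^α`. The fluctuation of
the unbounded weights is handled by the self-normalized exponent `s U - s² V / 2`, whose
exponential moment is at most one because `exp (u - u² / 2) ≤ 1 + u + u² / 2`; taking `s = ±λ` makes
it two-sided.
-/

section MeasureTheory

variable {Ω : Type*} [MeasurableSpace Ω]

lemma ofReal_one_sub_le_of_measure_compl_le {μ : Measure Ω} [IsProbabilityMeasure μ] {s : Set Ω}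
    {δ : ℝ} (hδ : 0 ≤ δ) (hs : μ sᶜ ≤ ENNReal.ofReal δ) : ENNReal.ofReal (1 - δ) ≤ μ s := by
  rw [ENNReal.ofReal_sub 1 hδ, ENNReal.ofReal_one, tsub_le_iff_right]
  calc 1 = μ (s ∪ sᶜ) := by rw [Set.union_compl_self, measure_univ]
    _ ≤ μ s + μ sᶜ := measure_union_le _ _
    _ ≤ μ s + ENNReal.ofReal δ := by gcongr

lemma measure_compl_inter_le_ofReal_add {μ : Measure Ω} {s t : Set Ω} {a b : ℝ} (ha : 0 ≤ a)
    (hb : 0 ≤ b) (hs : μ sᶜ ≤ ENNReal.ofReal a) (ht : μ tᶜ ≤ ENNReal.ofReal b) :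
    μ (s ∩ t)ᶜ ≤ ENNReal.ofReal (a + b) := by
  rw [Set.compl_inter, ENNReal.ofReal_add ha hb]
  exact (measure_union_le _ _).trans (add_le_add hs ht)

lemma measure_compl_lt_div_le_ofReal {μ : Measure Ω} {f : Ω → ENNReal} (hf : Measurable f)
    {M β : ℝ} (hM : 0 < M) (hβ : 0 < β) (h : ∫⁻ ω, f ω ∂μ ≤ ENNReal.ofReal M) :
    μ {ω | f ω < ENNReal.ofReal (M / β)}ᶜ ≤ ENNReal.ofReal β := by
  have hMβ : 0 < M / β := div_pos hM hβ
  calc μ {ω | f ω < ENNReal.ofReal (M / β)}ᶜ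
      = μ {ω | ENNReal.ofReal (M / β) ≤ f ω} := by simp only [Set.compl_ofPred, not_lt]
    _ ≤ (∫⁻ ω, f ω ∂μ) / ENNReal.ofReal (M / β) :=
        meas_ge_le_lintegral_div hf.aemeasurable (ENNReal.ofReal_pos.2 hMβ).ne'
          ENNReal.ofReal_ne_top
    _ ≤ ENNReal.ofReal M / ENNReal.ofReal (M / β) := by gcongr
    _ = ENNReal.ofReal β := by
        rw [← ENNReal.ofReal_div_of_pos hMβ, div_div_cancel₀ hM.ne']

lemma integrable_of_abs_le {μ : Measure Ω} [IsFiniteMeasure μ] {f : Ω → ℝ} {C : ℝ}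
    (hf : Measurable f) (hC : ∀ ω, |f ω| ≤ C) : Integrable f μ :=
  .of_bound hf.aestronglyMeasurable C (ae_of_all _ hC)

lemma sq_integral_le_integral_sq {μ : Measure Ω} [IsProbabilityMeasure μ] {f : Ω → ℝ}
    (hf : MemLp f 2 μ) : (∫ ω, f ω ∂μ) ^ 2 ≤ ∫ ω, f ω ^ 2 ∂μ := by
  have h := variance_eq_sub hf
  have := variance_nonneg f μ
  simp only [Pi.pow_apply] at h
  linarith

lemma lintegral_pi_exp_sum_le_one {ι Z : Type*} [Fintype ι] [MeasurableSpace Z] {μ : Measure Z}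
    [IsProbabilityMeasure μ] {g : Z → ℝ} (hg : Measurable g)
    (h : ∫⁻ z, ENNReal.ofReal (exp (g z)) ∂μ ≤ 1) :
    ∫⁻ ω, ENNReal.ofReal (exp (∑ i, g (ω i))) ∂(Measure.pi fun _ : ι => μ) ≤ 1 := by
  have hm : Measurable fun z => ENNReal.ofReal (exp (g z)) := by fun_prop
  have hindep := iIndepFun_pi (μ := fun _ : ι => μ) fun _ => hm.aemeasurable
  simp_rw [exp_sum, ENNReal.ofReal_prod_of_nonneg fun _ _ => (exp_pos _).le]
  rw [lintegral_prod_eq_prod_lintegral_of_indepFun Finset.univ _ hindep fun _ => by fun_prop]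
  refine Finset.prod_le_one' fun i _ => ?_
  exact ((measurePreserving_eval (fun _ : ι => μ) i).lintegral_comp hm).trans_le h

lemma integral_comp_eq_sum {A : Type*} [Fintype A] [MeasurableSpace A]
    [MeasurableSingletonClass A] {μ : Measure Ω} [IsFiniteMeasure μ] {e : Ω → A}
    (he : Measurable e) (f : A → ℝ) :
    ∫ ω, f (e ω) ∂μ = ∑ a, μ.real {ω | e ω = a} * f a := by
  rw [← integral_map he.aemeasurable (Measurable.of_discrete (f := f)).aestronglyMeasurable,
    integral_fintype .of_finite]
  exact Finset.sum_congr rfl fun a _ => by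
    rw [map_measureReal_apply he (measurableSet_singleton a), smul_eq_mul]; rfl

end MeasureTheory

section PACBayes

variable {Ω Z H : Type*} [MeasurableSpace Ω] [MeasurableSpace Z] [MeasurableSpace H]

lemma klDiv_eq_informationTheory_klDiv (Q P : Measure H) [IsProbabilityMeasure Q]
    [IsProbabilityMeasure P] : klDiv Q P = InformationTheory.klDiv Q P := by
  simp only [klDiv, InformationTheory.klDiv_def, probReal_univ, add_sub_cancel_right]

/-- A posterior in the PAC-Bayes sense: a probability measure `Q` with finite Kullback–Leibler
divergence to the prior `P`. -/
structure IsPosterior (P Q : Measure H) : Prop where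
  isProbabilityMeasure : IsProbabilityMeasure Q
  klDiv_ne_top : klDiv Q P ≠ ⊤

-- The Donsker–Varadhan inequality, as nonnegativity of the divergence from the tilted prior.
lemma integral_le_toReal_klDiv_add_log_integral_exp {P Q : Measure H} [IsProbabilityMeasure P]
    (hQ : IsPosterior P Q) {f : H → ℝ} (hfQ : Integrable f Q)
    (hfP : Integrable (fun h => exp (f h)) P) :
    ∫ h, f h ∂Q ≤ (klDiv Q P).toReal + log (∫ h, exp (f h) ∂P) := by
  have := hQ.isProbabilityMeasure
  have := isProbabilityMeasure_tilted hfP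
  have hkl := klDiv_eq_informationTheory_klDiv Q P
  obtain ⟨hac, hint⟩ := InformationTheory.klDiv_ne_top_iff.1 (hkl ▸ hQ.klDiv_ne_top)
  have h := InformationTheory.integral_llr_add_sub_measure_univ_nonneg
    (hac.trans (absolutelyContinuous_tilted hfP)) (integrable_llr_tilted_right hac hfQ hint hfP)
  rw [integral_llr_tilted_right hac hfQ hfP hint] at h
  rw [hkl, InformationTheory.toReal_klDiv_of_measure_eq hac (by simp only [measure_univ])]
  simp only [probReal_univ] at h
  linarith

theorem measure_compl_pacBayes_le {μ : Measure Ω} [SFinite μ] {P : Measure H}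
    [IsProbabilityMeasure P] {Φ : H → Ω → ℝ} (hΦ : Measurable fun q : H × Ω => Φ q.1 q.2)
    (hbdd : ∀ ω, ∃ C, ∀ h, |Φ h ω| ≤ C) {M β : ℝ} (hM : 0 < M) (hβ : 0 < β)
    (hexp : ∀ h, ∫⁻ ω, ENNReal.ofReal (exp (Φ h ω)) ∂μ ≤ ENNReal.ofReal M) :
    μ {ω | ∀ Q, IsPosterior P Q →
      ∫ h, Φ h ω ∂Q ≤ (klDiv Q P).toReal + log (M / β)}ᶜ
        ≤ ENNReal.ofReal β := by
  have hmeas : Measurable fun q : Ω × H => ENNReal.ofReal (exp (Φ q.2 q.1)) :=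
    (measurable_exp.comp (hΦ.comp measurable_swap)).ennreal_ofReal
  have hmean : ∫⁻ ω, ∫⁻ h, ENNReal.ofReal (exp (Φ h ω)) ∂P ∂μ ≤ ENNReal.ofReal M := by
    rw [lintegral_lintegral_swap hmeas.aemeasurable]
    exact (lintegral_mono hexp).trans_eq (by simp only [lintegral_const, measure_univ, mul_one])
  refine (measure_mono ?_).trans
    (measure_compl_lt_div_le_ofReal hmeas.lintegral_prod_right' hM hβ hmean)
  refine Set.compl_subset_compl.2 fun ω hω Q hQ => ?_
  obtain ⟨C, hC⟩ := hbdd ω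
  have := hQ.isProbabilityMeasure
  have hΦω : Measurable fun h => Φ h ω := hΦ.comp measurable_prodMk_right
  have hexpP : Integrable (fun h => exp (Φ h ω)) P :=
    integrable_of_abs_le (C := exp C) (by fun_prop) fun h => by
      simpa only [abs_exp, exp_le_exp] using (le_abs_self _).trans (hC h)
  have hlog : log (∫ h, exp (Φ h ω) ∂P) ≤ log (M / β) := by
    refine log_le_log (integral_exp_pos hexpP) ?_
    rw [← ENNReal.ofReal_le_ofReal_iff (div_pos hM hβ).le,
      ofReal_integral_eq_lintegral_ofReal hexpP (ae_of_all _ fun _ => (exp_pos _).le)]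
    exact (Set.mem_ofPred.1 hω).le
  have := integral_le_toReal_klDiv_add_log_integral_exp hQ (integrable_of_abs_le hΦω hC) hexpP
  linarith

theorem measure_compl_pacBayes_sum_le {ι : Type*} [Fintype ι] {μ : Measure Z}
    [IsProbabilityMeasure μ] {P : Measure H} [IsProbabilityMeasure P] {g : H → Z → ℝ}
    (hg : Measurable fun q : H × Z => g q.1 q.2) (hbdd : ∀ z, ∃ C, ∀ h, |g h z| ≤ C)
    (hexp : ∀ h, ∫⁻ z, ENNReal.ofReal (exp (g h z)) ∂μ ≤ 1) {β : ℝ} (hβ : 0 < β) :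
    (Measure.pi fun _ : ι => μ) {ω | ∀ Q, IsPosterior P Q →
      ∑ i, ∫ h, g h (ω i) ∂Q ≤ (klDiv Q P).toReal + log (1 / β)}ᶜ
        ≤ ENNReal.ofReal β := by
  choose C hC using hbdd
  have hmeas : Measurable fun q : H × (ι → Z) => ∑ i, g q.1 (q.2 i) :=
    Finset.measurable_sum _ fun i _ => hg.comp (f := fun q : H × (ι → Z) => (q.1, q.2 i))
      (by fun_prop)
  have hbddSum (ω : ι → Z) : ∃ C, ∀ h, |∑ i, g h (ω i)| ≤ C :=
    ⟨∑ i, C (ω i), fun h => (Finset.abs_sum_le_sum_abs _ _).trans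
      (Finset.sum_le_sum fun i _ => hC (ω i) h)⟩
  refine (measure_mono ?_).trans (measure_compl_pacBayes_le (P := P) hmeas hbddSum one_pos hβ
    fun h => (lintegral_pi_exp_sum_le_one (hg.comp measurable_prodMk_left) (hexp h)).trans_eq
      ENNReal.ofReal_one.symm)
  refine Set.compl_subset_compl.2 fun ω hω Q hQ => ?_
  have := hQ.isProbabilityMeasure
  have hint (i) : Integrable (fun h => g h (ω i)) Q :=
    integrable_of_abs_le (hg.comp measurable_prodMk_right) (hC (ω i))
  exact (integral_finsetSum _ fun i _ => hint i).symm.trans_le (hω Q hQ)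

end PACBayes

section EmpiricalMean

variable {Z : Type*}

/-- The average of `g` over the sample `ω` (equal to `0` when the sample is empty). -/
noncomputable def empiricalMean {n : ℕ} (g : Z → ℝ) (ω : Fin n → Z) : ℝ :=
  (n : ℝ)⁻¹ * ∑ i, g (ω i)

lemma empiricalMean_sub {n : ℕ} (f g : Z → ℝ) (ω : Fin n → Z) :
    empiricalMean (fun z => f z - g z) ω = empiricalMean f ω - empiricalMean g ω := by
  simp only [empiricalMean, Finset.sum_sub_distrib, mul_sub]

lemma empiricalMean_const_mul {n : ℕ} (a : ℝ) (g : Z → ℝ) (ω : Fin n → Z) :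
    empiricalMean (fun z => a * g z) ω = a * empiricalMean g ω := by
  simp only [empiricalMean, ← Finset.mul_sum, mul_left_comm]

lemma empiricalMean_const {n : ℕ} (hn : n ≠ 0) (a : ℝ) (ω : Fin n → Z) :
    empiricalMean (fun _ => a) ω = a := by
  simp [empiricalMean, hn]

lemma natCast_mul_empiricalMean {n : ℕ} (hn : n ≠ 0) (g : Z → ℝ) (ω : Fin n → Z) :
    n * empiricalMean g ω = ∑ i, g (ω i) :=
  mul_inv_cancel_left₀ (Nat.cast_ne_zero.2 hn) _

lemma abs_empiricalMean_le {n : ℕ} {f g : Z → ℝ} (hfg : ∀ z, |f z| ≤ g z) (ω : Fin n → Z) :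
    |empiricalMean f ω| ≤ empiricalMean g ω := by
  rw [empiricalMean, abs_mul, abs_of_nonneg (by positivity)]
  exact mul_le_mul_of_nonneg_left
    ((Finset.abs_sum_le_sum_abs _ _).trans (Finset.sum_le_sum fun i _ => hfg _)) (by positivity)

lemma empiricalMean_mem_Icc {n : ℕ} (hn : n ≠ 0) {g : Z → ℝ} {a b : ℝ}
    (hg : ∀ z, g z ∈ Set.Icc a b) (ω : Fin n → Z) : empiricalMean g ω ∈ Set.Icc a b := by
  have hn0 : (0 : ℝ) < n := by positivity
  have hlower := Finset.card_nsmul_le_sum Finset.univ (fun i => g (ω i)) a fun i _ => (hg _).1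
  have hupper := Finset.sum_le_card_nsmul Finset.univ (fun i => g (ω i)) b fun i _ => (hg _).2
  simp only [Finset.card_univ, Fintype.card_fin, nsmul_eq_mul] at hlower hupper
  exact ⟨(le_inv_mul_iff₀ hn0).2 hlower, (inv_mul_le_iff₀ hn0).2 hupper⟩

end EmpiricalMean

section Concentration

variable {Z H : Type*} [MeasurableSpace Z] [MeasurableSpace H]

lemma lintegral_exp_hoeffding_le_one {μ : Measure Z} [IsProbabilityMeasure μ] {f : Z → ℝ}
    (hf : Measurable f) {a b : ℝ} (hfab : ∀ z, f z ∈ Set.Icc a b) (s : ℝ) :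
    ∫⁻ z, ENNReal.ofReal (exp (s * (f z - ∫ y, f y ∂μ) - s ^ 2 * (b - a) ^ 2 / 8)) ∂μ ≤ 1 := by
  have hsub := hasSubgaussianMGF_of_mem_Icc (μ := μ) hf.aemeasurable (ae_of_all _ hfab)
  have hmgf : ∫ z, exp (s * (f z - ∫ y, f y ∂μ)) ∂μ ≤ exp (s ^ 2 * (b - a) ^ 2 / 8) := by
    refine (hsub.mgf_le s).trans_eq (congrArg exp ?_)
    simp only [NNReal.coe_pow, NNReal.coe_div, coe_nnnorm, norm_eq_abs, NNReal.coe_ofNat, div_pow,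
      sq_abs]
    ring
  rw [← ofReal_integral_eq_lintegral_ofReal (by
    simpa only [exp_sub] using (hsub.integrable_exp_mul s).div_const _)
    (ae_of_all _ fun _ => (exp_pos _).le), ENNReal.ofReal_le_one]
  simp_rw [exp_sub, integral_div]
  exact (div_le_one (exp_pos _)).2 hmgf

lemma exists_midpoint_abs_sub_le {N : ℕ} (hN : 0 < N) {x : ℝ} (hx : x ∈ Set.Icc (0 : ℝ) 1) :
    ∃ j : Fin N, |((j : ℕ) + 1 / 2) / N - x| ≤ 1 / (2 * (N : ℝ)) := by
  have hN0 : (0 : ℝ) < N := by exact_mod_cast hN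
  have hcell (j : ℕ) (hj : (j : ℝ) ≤ N * x) (hj' : N * x ≤ j + 1) :
      |((j : ℝ) + 1 / 2) / N - x| ≤ 1 / (2 * (N : ℝ)) := by
    have hscale : ((j : ℝ) + 1 / 2) / N - x = (j + 1 / 2 - N * x) / N := by field_simp
    rw [hscale, abs_div, abs_of_pos hN0, ← div_div]
    gcongr
    exact abs_le.2 ⟨by linarith, by linarith⟩
  rcases hx.2.lt_or_eq with hx1 | rfl
  · have hNx : 0 ≤ N * x := mul_nonneg hN0.le hx.1
    exact ⟨⟨⌊N * x⌋₊, (Nat.floor_lt hNx).2 (mul_lt_of_lt_one_right hN0 hx1)⟩,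
      hcell _ (Nat.floor_le hNx) (Nat.lt_floor_add_one _).le⟩
  · refine ⟨⟨N - 1, by omega⟩, hcell _ ?_ ?_⟩ <;> simp [Nat.cast_sub hN]

/-- The `j`-th midpoint of the division of `[4 * r, 4 * (r + 1)]` into `N` equal intervals. For `D`
in `[r, r + 1]` it approximates the maximizer `4 * D` of `s ↦ s * D - s ^ 2 / 8`. -/
noncomputable def gridSlope (N : ℕ) (r : ℝ) (j : Fin N) : ℝ := 4 * (r + ((j : ℕ) + 1 / 2) / N)

lemma exp_two_mul_sq_le_sum_gridSlope {N : ℕ} (hN : 0 < N) {t : ℝ} (ht : 0 ≤ t) {r D : ℝ}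
    (hD : D ∈ Set.Icc r (r + 1)) :
    exp (2 * t * D ^ 2) ≤ exp (t / (2 * N ^ 2)) *
      ∑ j : Fin N, exp (t * (gridSlope N r j * D - gridSlope N r j ^ 2 / 8)) := by
  obtain ⟨j, hj⟩ := exists_midpoint_abs_sub_le hN
    (x := D - r) ⟨sub_nonneg.2 hD.1, by linarith [hD.2]⟩
  have hclose : (gridSlope N r j - 4 * D) ^ 2 ≤ 4 / N ^ 2 := by
    calc (gridSlope N r j - 4 * D) ^ 2 = 16 * |((j : ℕ) + 1 / 2) / N - (D - r)| ^ 2 := by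
          rw [sq_abs, gridSlope]; ring
      _ ≤ 16 * (1 / (2 * (N : ℝ))) ^ 2 := by gcongr
      _ = 4 / N ^ 2 := by ring
  have hexponent : 2 * t * D ^ 2 ≤
      t / (2 * N ^ 2) + t * (gridSlope N r j * D - gridSlope N r j ^ 2 / 8) := by
    calc 2 * t * D ^ 2 = t * (gridSlope N r j - 4 * D) ^ 2 / 8
          + t * (gridSlope N r j * D - gridSlope N r j ^ 2 / 8) := by ring
      _ ≤ t * (4 / N ^ 2) / 8 + t * (gridSlope N r j * D - gridSlope N r j ^ 2 / 8) := by gcongr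
      _ = _ := by ring
  calc exp (2 * t * D ^ 2)
      ≤ exp (t / (2 * N ^ 2)) * exp (t * (gridSlope N r j * D - gridSlope N r j ^ 2 / 8)) := by
        rw [← exp_add]; exact exp_le_exp.2 hexponent
    _ ≤ _ := by
        gcongr
        exact Finset.single_le_sum
          (f := fun j => exp (t * (gridSlope N r j * D - gridSlope N r j ^ 2 / 8)))
          (fun _ _ => (exp_pos _).le) (Finset.mem_univ j)

lemma exists_le_sq_le_two_mul {n : ℕ} (hn : n ≠ 0) : ∃ N : ℕ, n ≤ N ^ 2 ∧ N ^ 2 ≤ 2 * n := by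
  obtain ⟨k, rfl⟩ := Nat.exists_eq_succ_of_ne_zero hn
  refine ⟨k.sqrt + 1, Nat.lt_succ_sqrt' k, ?_⟩
  have := k.sqrt_le'
  zify at this ⊢
  nlinarith [sq_nonneg ((k.sqrt : ℤ) - 1)]

lemma exp_le_four_mul {x : ℝ} (hx : x ∈ Set.Icc (1 / 2 : ℝ) 1) : exp x ≤ 4 * x := by
  have hpos : 0 < 2 - x := by linarith [hx.2]
  calc exp x = exp 1 / exp (1 - x) := by rw [← exp_sub, sub_sub_cancel]
    _ ≤ 3 / (2 - x) := by
        gcongr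
        · exact exp_one_lt_three.le
        · linarith [add_one_le_exp (1 - x)]
    _ ≤ 4 * x := by
        rw [div_le_iff₀ hpos]
        nlinarith [mul_nonneg (sub_nonneg.2 hx.1) (sub_nonneg.2 hx.2)]

lemma exists_mul_exp_le_two_mul_sqrt {n : ℕ} (hn : n ≠ 0) :
    ∃ N : ℕ, 0 < N ∧ exp (n / (2 * (N : ℝ) ^ 2)) * N ≤ 2 * √n := by
  obtain ⟨N, hnN, hNn⟩ := exists_le_sq_le_two_mul hn
  have hN : 0 < N := Nat.pos_of_ne_zero fun h => hn (by simpa [h] using hnN)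
  have hN0 : (0 : ℝ) < (N : ℝ) ^ 2 := by positivity
  have hnN' : (n : ℝ) ≤ (N : ℝ) ^ 2 := by exact_mod_cast hnN
  have hNn' : (N : ℝ) ^ 2 ≤ 2 * n := by exact_mod_cast hNn
  have hexp : exp (n / (N : ℝ) ^ 2) ≤ 4 * (n / (N : ℝ) ^ 2) :=
    exp_le_four_mul ⟨by rw [le_div_iff₀ hN0]; linarith, (div_le_one hN0).2 hnN'⟩
  refine ⟨N, hN, abs_le_of_sq_le_sq' ?_ (by positivity) |>.2⟩
  calc (exp (n / (2 * (N : ℝ) ^ 2)) * N) ^ 2 = exp (n / (N : ℝ) ^ 2) * (N : ℝ) ^ 2 := by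
        rw [mul_pow, ← exp_nat_mul]; congr 2; push_cast; field_simp
    _ ≤ 4 * (n / (N : ℝ) ^ 2) * (N : ℝ) ^ 2 := by gcongr
    _ = (2 * √n) ^ 2 := by rw [mul_pow, sq_sqrt n.cast_nonneg]; field_simp; norm_num

-- The two-sided exponential moment costs only `2 * √n`, because the deviations of a fixed `f` lie
-- in an interval of length one and so about `√n` slopes suffice for the union bound.
theorem lintegral_exp_sq_deviation_le {n : ℕ} (hn : n ≠ 0) {μ : Measure Z}
    [IsProbabilityMeasure μ] {f : Z → ℝ} (hf : Measurable f) {a : ℝ}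
    (hfa : ∀ z, f z ∈ Set.Icc a (a + 1)) :
    ∫⁻ ω, ENNReal.ofReal (exp (2 * n * (empiricalMean f ω - ∫ z, f z ∂μ) ^ 2))
      ∂(Measure.pi fun _ : Fin n => μ) ≤ ENNReal.ofReal (2 * √n) := by
  obtain ⟨N, hN, hNn⟩ := exists_mul_exp_le_two_mul_sqrt hn
  set m := ∫ z, f z ∂μ
  let s := gridSlope N (a - m)
  let S (j : Fin N) (ω : Fin n → Z) : ℝ := ∑ i, (s j * (f (ω i) - m) - s j ^ 2 / 8)
  have hmoment (j) :
      ∫⁻ ω, ENNReal.ofReal (exp (S j ω)) ∂(Measure.pi fun _ : Fin n => μ) ≤ 1 :=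
    lintegral_pi_exp_sum_le_one (g := fun z => s j * (f z - m) - s j ^ 2 / 8) (by fun_prop) <| by
      simpa only [add_sub_cancel_left, one_pow, mul_one]
        using lintegral_exp_hoeffding_le_one (μ := μ) hf hfa (s j)
  have hgrid (ω : Fin n → Z) : exp (2 * n * (empiricalMean f ω - m) ^ 2)
      ≤ exp (n / (2 * N ^ 2)) * ∑ j, exp (S j ω) := by
    have hD := empiricalMean_mem_Icc hn hfa ω
    refine (exp_two_mul_sq_le_sum_gridSlope hN n.cast_nonneg (r := a - m)
      ⟨by linarith [hD.1], by linarith [hD.2]⟩).trans_eq ?_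
    congr! 3 with j
    simp only [S, ← natCast_mul_empiricalMean hn fun z => s j * (f z - m) - s j ^ 2 / 8,
      empiricalMean_sub, empiricalMean_const_mul, empiricalMean_const hn]
    rfl
  calc _ ≤ ∫⁻ ω, ENNReal.ofReal (exp (n / (2 * N ^ 2))) * ∑ j, ENNReal.ofReal (exp (S j ω))
          ∂(Measure.pi fun _ : Fin n => μ) := lintegral_mono fun ω => by
        rw [← ENNReal.ofReal_sum_of_nonneg fun _ _ => (exp_pos _).le,
          ← ENNReal.ofReal_mul (exp_pos _).le]
        exact ENNReal.ofReal_le_ofReal (hgrid ω)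
    _ = ENNReal.ofReal (exp (n / (2 * N ^ 2))) *
          ∑ j, ∫⁻ ω, ENNReal.ofReal (exp (S j ω)) ∂(Measure.pi fun _ : Fin n => μ) := by
        rw [lintegral_const_mul _ (by fun_prop), lintegral_finsetSum _ fun j _ => by fun_prop]
    _ ≤ ENNReal.ofReal (exp (n / (2 * N ^ 2))) * ∑ _j : Fin N, 1 := by gcongr; exact hmoment _
    _ ≤ ENNReal.ofReal (2 * √n) := by
        rw [Finset.sum_const, Finset.card_univ, Fintype.card_fin, nsmul_one,
          ← ENNReal.ofReal_natCast, ← ENNReal.ofReal_mul (exp_pos _).le]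
        exact ENNReal.ofReal_le_ofReal hNn

theorem measure_compl_pacBayes_abs_deviation_le {n : ℕ} (hn : n ≠ 0) {μ : Measure Z}
    [IsProbabilityMeasure μ] {P : Measure H} [IsProbabilityMeasure P] {ℓ : H → Z → ℝ}
    (hℓ : Measurable fun q : H × Z => ℓ q.1 q.2) {a : ℝ} (hℓa : ∀ h z, ℓ h z ∈ Set.Icc a (a + 1))
    {β : ℝ} (hβ : 0 < β) :
    (Measure.pi fun _ : Fin n => μ) {ω | ∀ Q, IsPosterior P Q →
      |∫ h, (empiricalMean (ℓ h) ω - ∫ z, ℓ h z ∂μ) ∂Q|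
        ≤ √(((klDiv Q P).toReal + log (2 * √n / β)) / (2 * n))}ᶜ
      ≤ ENNReal.ofReal β := by
  let D (h : H) (ω : Fin n → Z) : ℝ := empiricalMean (ℓ h) ω - ∫ z, ℓ h z ∂μ
  have hD : Measurable fun q : H × (Fin n → Z) => D q.1 q.2 := by
    have hmean : Measurable fun q : H × (Fin n → Z) => ∫ z, ℓ q.1 z ∂μ :=
      (hℓ.stronglyMeasurable.integral_prod_right' (ν := μ)).measurable.comp measurable_fst
    have hsample (i : Fin n) : Measurable fun q : H × (Fin n → Z) => ℓ q.1 (q.2 i) :=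
      hℓ.comp (f := fun q : H × (Fin n → Z) => (q.1, q.2 i)) (by fun_prop)
    exact ((Finset.measurable_sum _ fun i _ => hsample i).const_mul _).sub hmean
  have hDle (h ω) : |D h ω| ≤ 1 := by
    have hemp := empiricalMean_mem_Icc hn (hℓa h) ω
    have hmean : ∫ z, ℓ h z ∂μ ∈ Set.Icc a (a + 1) :=
      (convex_Icc a (a + 1)).integral_mem isClosed_Icc (ae_of_all _ (hℓa h)) <|
        .of_mem_Icc a (a + 1) (hℓ.comp measurable_prodMk_left).aemeasurable (ae_of_all _ (hℓa h))
    exact abs_le.2 ⟨by linarith [hemp.1, hmean.2], by linarith [hemp.2, hmean.1]⟩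
  have hbdd (ω) : ∃ C, ∀ h, |2 * n * D h ω ^ 2| ≤ C := ⟨2 * n, fun h => by
    rw [abs_of_nonneg (by positivity)]
    exact mul_le_of_le_one_right (by positivity) ((sq_le_one_iff_abs_le_one _).2 (hDle h ω))⟩
  refine (measure_mono ?_).trans <| measure_compl_pacBayes_le (P := P)
    (Φ := fun h ω => 2 * n * D h ω ^ 2) (by fun_prop) hbdd (by positivity) hβ fun h =>
      lintegral_exp_sq_deviation_le hn (hℓ.comp measurable_prodMk_left) (hℓa h)
  refine Set.compl_subset_compl.2 fun ω hω Q hQ => ?_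
  have := hQ.isProbabilityMeasure
  have hDω : Measurable fun h => D h ω := hD.comp measurable_prodMk_right
  have hmem : MemLp (fun h => D h ω) 2 Q :=
    .of_bound hDω.aestronglyMeasurable 1 (ae_of_all _ fun h => hDle h ω)
  have hpac := hω Q hQ
  rw [integral_const_mul] at hpac
  refine abs_le_sqrt ((sq_integral_le_integral_sq hmem).trans ?_)
  rw [le_div_iff₀ (by positivity)]
  linarith

end Concentration

section InversePropensity

lemma abs_le_one_of_mem_Icc_neg_one_zero {x : ℝ} (hx : x ∈ Set.Icc (-1) 0) : |x| ≤ 1 :=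
  abs_le.2 ⟨hx.1, hx.2.trans zero_le_one⟩

variable {A : Type*}

/-- The cost of the logged action `a`, reweighted from the propensities `p` to the policy `q` by
the exponentially smoothed importance weight `q a / p a ^ α`. -/
noncomputable def ipsCost (p c q : A → ℝ) (α : ℝ) (a : A) : ℝ := c a * q a / p a ^ α

lemma sq_ipsCost_le {p c q : A → ℝ} {a : A} (hp : 0 ≤ p a) (hq : q a ∈ Set.Icc 0 1) (α : ℝ) :
    ipsCost p c q α a ^ 2 ≤ q a * c a ^ 2 / p a ^ (2 * α) := by
  rw [ipsCost, div_pow, mul_pow, mul_comm 2 α, rpow_mul hp, rpow_two, mul_comm (q a)]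
  gcongr
  exact pow_le_of_le_one hq.1 hq.2 two_ne_zero

variable [Fintype A]

/-- The mean of `ipsCost` when the action is drawn from positive propensities `p`. -/
noncomputable def ipsMean (p c q : A → ℝ) (α : ℝ) : ℝ := ∑ a, c a * q a * p a ^ (1 - α)

/-- The summand of `V̄_n^α` for the logged action `a`: an upper bound on the sum of the square of
`ipsCost` and the mean of that square. The squares of `q` are bounded by `q` to make it linear
in the policy. -/
noncomputable def ipsVarianceProxy (p c q : A → ℝ) (α : ℝ) (a : A) : ℝ :=
  (∑ b, p b * (q b / p b ^ (2 * α))) + q a * c a ^ 2 / p a ^ (2 * α)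

/-- The centred `ipsCost` at slope `s`, compensated by the variance proxy so that its exponential
moment is at most one. -/
noncomputable def ipsExponent (p c q : A → ℝ) (α s : ℝ) (a : A) : ℝ :=
  s * (ipsCost p c q α a - ipsMean p c q α) - s ^ 2 / 2 * ipsVarianceProxy p c q α a

lemma isLinearMap_ipsExponent (p c : A → ℝ) (α s : ℝ) (a : A) :
    IsLinearMap ℝ fun q => ipsExponent p c q α s a where
  map_add q r := by
    simp only [ipsExponent, ipsCost, ipsMean, ipsVarianceProxy, Pi.add_apply, mul_add, add_mul,
      add_div, Finset.sum_add_distrib]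
    ring
  map_smul t q := by
    have hmean : ∑ b, c b * (t * q b) * p b ^ (1 - α) = t * ∑ b, c b * q b * p b ^ (1 - α) := by
      rw [Finset.mul_sum]; exact Finset.sum_congr rfl fun b _ => by ring
    have hvar : ∑ b, p b * (t * q b / p b ^ (2 * α)) = t * ∑ b, p b * (q b / p b ^ (2 * α)) := by
      rw [Finset.mul_sum]; exact Finset.sum_congr rfl fun b _ => by ring
    simp only [ipsExponent, ipsCost, ipsMean, ipsVarianceProxy, Pi.smul_apply, smul_eq_mul,
      hmean, hvar]
    ring

lemma integral_ipsCost [MeasurableSpace A] [MeasurableSingletonClass A] {μ : Measure A}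
    [IsFiniteMeasure μ] (hμ : ∀ a, 0 < μ.real {a}) (c q : A → ℝ) (α : ℝ) :
    ∫ a, ipsCost (fun a => μ.real {a}) c q α a ∂μ = ipsMean (fun a => μ.real {a}) c q α := by
  rw [integral_fintype .of_finite]
  refine Finset.sum_congr rfl fun a _ => ?_
  rw [ipsCost, rpow_sub (hμ a), rpow_one, smul_eq_mul]
  ring

lemma sq_ipsCost_add_integral_le [MeasurableSpace A] [MeasurableSingletonClass A] {μ : Measure A}
    [IsFiniteMeasure μ] {c q : A → ℝ} (hc : ∀ a, |c a| ≤ 1) (hq : ∀ a, q a ∈ Set.Icc 0 1)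
    (α : ℝ) (a : A) :
    ipsCost (fun a => μ.real {a}) c q α a ^ 2
        + ∫ b, ipsCost (fun a => μ.real {a}) c q α b ^ 2 ∂μ
      ≤ ipsVarianceProxy (fun a => μ.real {a}) c q α a := by
  rw [integral_fintype .of_finite, add_comm, ipsVarianceProxy]
  simp only [smul_eq_mul]
  gcongr with b
  · refine (sq_ipsCost_le (p := fun a => μ.real {a}) measureReal_nonneg (hq b) α).trans ?_
    gcongr
    exact mul_le_of_le_one_right (hq b).1 ((sq_le_one_iff_abs_le_one _).2 (hc b))
  · exact sq_ipsCost_le (p := fun a => μ.real {a}) measureReal_nonneg (hq a) α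

lemma exp_sub_sq_half_le (u : ℝ) : exp (u - u ^ 2 / 2) ≤ 1 + u + u ^ 2 / 2 := by
  have hlower : 1 - u + u ^ 2 / 2 ≤ exp (u ^ 2 / 2 - u) := by
    linarith [add_one_le_exp (u ^ 2 / 2 - u)]
  have hpos : 0 ≤ 1 + u + u ^ 2 / 2 := by nlinarith [sq_nonneg (u + 1)]
  rw [← neg_sub (u ^ 2 / 2), exp_neg, inv_le_iff_one_le_mul₀ (exp_pos _)]
  calc (1 : ℝ) ≤ 1 + u ^ 4 / 4 := by linarith [show 0 ≤ u ^ 4 by positivity]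
    _ = (1 + u + u ^ 2 / 2) * (1 - u + u ^ 2 / 2) := by ring
    _ ≤ (1 + u + u ^ 2 / 2) * exp (u ^ 2 / 2 - u) := by gcongr

lemma lintegral_exp_selfNormalized_le_one {Ω : Type*} [MeasurableSpace Ω] {μ : Measure Ω}
    [IsProbabilityMeasure μ] {u : Ω → ℝ} (hu : MemLp u 2 μ) :
    ∫⁻ ω, ENNReal.ofReal (exp (u ω - ∫ y, u y ∂μ - (u ω ^ 2 + ∫ y, u y ^ 2 ∂μ) / 2)) ∂μ ≤ 1 := by
  set m := ∫ y, u y ∂μ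
  set v := ∫ y, u y ^ 2 ∂μ
  have hlin : Integrable (fun ω => 1 + u ω) μ :=
    (integrable_const 1).add (hu.integrable one_le_two)
  have hsq : Integrable (fun ω => u ω ^ 2 / 2) μ := hu.integrable_sq.div_const 2
  have hint : Integrable (fun ω => 1 + u ω + u ω ^ 2 / 2) μ := hlin.add hsq
  have hpos (x : ℝ) : 0 ≤ 1 + x + x ^ 2 / 2 := (exp_pos _).le.trans (exp_sub_sq_half_le x)
  calc _ ≤ ∫⁻ ω, ENNReal.ofReal ((1 + u ω + u ω ^ 2 / 2) * exp (-(m + v / 2))) ∂μ := by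
        refine lintegral_mono fun ω => ENNReal.ofReal_le_ofReal ?_
        rw [show u ω - m - (u ω ^ 2 + v) / 2 = u ω - u ω ^ 2 / 2 + -(m + v / 2) by ring, exp_add]
        gcongr
        exact exp_sub_sq_half_le (u ω)
    _ = ENNReal.ofReal ((1 + m + v / 2) * exp (-(m + v / 2))) := by
        rw [← ofReal_integral_eq_lintegral_ofReal (hint.mul_const _)
          (ae_of_all _ fun ω => mul_nonneg (hpos _) (exp_pos _).le), integral_mul_const,
          integral_add hlin hsq, integral_add (integrable_const 1) (hu.integrable one_le_two),
          integral_div, integral_const, probReal_univ, one_smul]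
    _ ≤ 1 := by
        rw [ENNReal.ofReal_le_one, exp_neg, ← div_eq_mul_inv, div_le_one (exp_pos _)]
        linarith [add_one_le_exp (m + v / 2)]

lemma lintegral_exp_ipsExponent_le_one [MeasurableSpace A] [MeasurableSingletonClass A]
    {μ : Measure A} [IsProbabilityMeasure μ] (hμ : ∀ a, 0 < μ.real {a}) {c q : A → ℝ}
    (hc : ∀ a, |c a| ≤ 1) (hq : ∀ a, q a ∈ Set.Icc 0 1) (α s : ℝ) :
    ∫⁻ a, ENNReal.ofReal (exp (ipsExponent (fun a => μ.real {a}) c q α s a)) ∂μ ≤ 1 := by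
  refine (lintegral_mono fun a => ENNReal.ofReal_le_ofReal (exp_le_exp.2 ?_)).trans <|
    lintegral_exp_selfNormalized_le_one
      (u := fun a => s * ipsCost (fun a => μ.real {a}) c q α a) .of_discrete
  simp only [mul_pow, integral_const_mul, integral_ipsCost hμ]
  have := mul_le_mul_of_nonneg_left (sq_ipsCost_add_integral_le (μ := μ) hc hq α a)
    (by positivity : 0 ≤ s ^ 2 / 2)
  rw [ipsExponent]
  linarith

lemma abs_ipsMean_sub_le {p c q : A → ℝ} {α : ℝ} (hα : α ≤ 1) (hp : ∀ a, p a ∈ Set.Icc 0 1)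
    (hc : ∀ a, c a ∈ Set.Icc (-1) 0) (hq : ∀ a, 0 ≤ q a) (hq1 : ∑ a, q a = 1) :
    |ipsMean p c q α - ∑ a, q a * c a| ≤ 1 - ∑ a, q a * p a ^ (1 - α) := by
  have hterm (a : A) : |c a * q a * p a ^ (1 - α) - q a * c a| ≤ q a * (1 - p a ^ (1 - α)) := by
    have hle : p a ^ (1 - α) ≤ 1 := rpow_le_one (hp a).1 (hp a).2 (by linarith)
    rw [show c a * q a * p a ^ (1 - α) - q a * c a = -(c a * (q a * (1 - p a ^ (1 - α)))) by ring,
      abs_neg, abs_mul, abs_of_nonneg (mul_nonneg (hq a) (sub_nonneg.2 hle))]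
    exact mul_le_of_le_one_left (mul_nonneg (hq a) (sub_nonneg.2 hle))
      (abs_le_one_of_mem_Icc_neg_one_zero (hc a))
  calc |ipsMean p c q α - ∑ a, q a * c a|
      = |∑ a, (c a * q a * p a ^ (1 - α) - q a * c a)| := by rw [Finset.sum_sub_distrib, ipsMean]
    _ ≤ ∑ a, q a * (1 - p a ^ (1 - α)) :=
        (Finset.abs_sum_le_sum_abs _ _).trans (Finset.sum_le_sum fun a _ => hterm a)
    _ = 1 - ∑ a, q a * p a ^ (1 - α) := by
        simp only [mul_sub, mul_one, Finset.sum_sub_distrib, hq1]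

end InversePropensity

section StochasticPolicies

variable {X A H : Type*} [MeasurableSpace H]

/-- The policy `π_Q` that draws a hypothesis `h` from `Q` and plays `ev h x`. -/
noncomputable def gibbsPolicy (ev : H → X → A) (Q : Measure H) (x : X) (a : A) : ℝ :=
  Q.real {h | ev h x = a}

lemma gibbsPolicy_mem_Icc (ev : H → X → A) (Q : Measure H) [IsProbabilityMeasure Q] (x : X)
    (a : A) : gibbsPolicy ev Q x a ∈ Set.Icc 0 1 :=
  ⟨measureReal_nonneg, measureReal_le_one⟩

variable [MeasurableSpace X]

/-- The risk of the policy `q` for contexts drawn from `ν` and costs `c`. -/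
noncomputable def policyRisk [Fintype A] (ν : Measure X) (c q : X → A → ℝ) : ℝ :=
  ∫ x, ∑ a, q x a * c x a ∂ν

variable [MeasurableSpace A]

/-- The probability `π₀(a | x)` with which the logging policy `κ` draws the action `a`. -/
noncomputable def propensity (κ : Kernel X A) (x : X) (a : A) : ℝ := (κ x).real {a}

lemma policyRisk_compProd_fst [Fintype A] (ν : Measure X) [SFinite ν] (κ : Kernel X A)
    [IsMarkovKernel κ] {c q : X → A → ℝ} (hc : ∀ a, Measurable fun x => c x a)
    (hq : ∀ a, Measurable fun x => q x a) :
    policyRisk (ν ⊗ₘ κ) (fun z => c z.1) (fun z => q z.1) = policyRisk ν c q := by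
  have hm : Measurable fun x => ∑ a, q x a * c x a := by fun_prop
  simp only [policyRisk]
  conv_rhs => rw [← Measure.fst_compProd ν κ, Measure.fst,
    integral_map measurable_fst.aemeasurable hm.aestronglyMeasurable]

variable [MeasurableSingletonClass A]

lemma measurable_propensity (κ : Kernel X A) (a : A) : Measurable fun x => propensity κ x a :=
  (κ.measurable_coe (measurableSet_singleton a)).ennreal_toReal

lemma measurable_gibbsPolicy {ev : H → X → A} (hev : Measurable fun q : H × X => ev q.1 q.2)
    (Q : Measure H) [SFinite Q] (a : A) : Measurable fun x => gibbsPolicy ev Q x a :=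
  (measurable_measure_prodMk_right (hev (measurableSet_singleton a))).ennreal_toReal

lemma measurable_apply_of_countable [Countable A] {f : X → A → ℝ}
    (hf : ∀ a, Measurable fun x => f x a) {g : X → A} (hg : Measurable g) :
    Measurable fun x => f x (g x) :=
  (measurable_from_prod_countable_left (f := fun z : X × A => f z.1 z.2) hf).comp
    (measurable_id.prodMk hg)

lemma integral_linearMap_single_eq_gibbsPolicy [Finite A] [DecidableEq A] (L : (A → ℝ) →ₗ[ℝ] ℝ)
    {ev : H → X → A} (hev : Measurable fun q : H × X => ev q.1 q.2) (Q : Measure H)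
    [IsFiniteMeasure Q] (x : X) :
    ∫ h, L (fun a => if ev h x = a then 1 else 0) ∂Q = L (gibbsPolicy ev Q x) := by
  have := Fintype.ofFinite A
  rw [integral_comp_eq_sum (e := fun h => ev h x) (hev.comp measurable_prodMk_right)
    fun b => L (fun a => if b = a then 1 else 0), L.pi_apply_eq_sum_univ]
  rfl

variable [Fintype A]

lemma integral_apply_eq_sum_gibbsPolicy {ev : H → X → A}
    (hev : Measurable fun q : H × X => ev q.1 q.2) (Q : Measure H) [IsFiniteMeasure Q] (x : X)
    (f : A → ℝ) : ∫ h, f (ev h x) ∂Q = ∑ a, gibbsPolicy ev Q x a * f a :=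
  integral_comp_eq_sum (hev.comp measurable_prodMk_right) f

lemma sum_gibbsPolicy {ev : H → X → A} (hev : Measurable fun q : H × X => ev q.1 q.2)
    (Q : Measure H) [IsProbabilityMeasure Q] (x : X) : ∑ a, gibbsPolicy ev Q x a = 1 := by
  simpa only [integral_const, probReal_univ, one_smul, mul_one] using
    (integral_apply_eq_sum_gibbsPolicy hev Q x fun _ => 1).symm

lemma integral_integral_eq_policyRisk {ν : Measure X} [IsFiniteMeasure ν] {Q : Measure H}
    [IsFiniteMeasure Q] {ev : H → X → A} (hev : Measurable fun q : H × X => ev q.1 q.2)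
    {c : X → A → ℝ} (hcm : ∀ a, Measurable fun x => c x a) {C : ℝ} (hC : ∀ x a, |c x a| ≤ C) :
    ∫ h, ∫ x, c x (ev h x) ∂ν ∂Q = policyRisk ν c (gibbsPolicy ev Q) := by
  have hint : Integrable (fun q : H × X => c q.2 (ev q.1 q.2)) (Q.prod ν) :=
    integrable_of_abs_le (measurable_apply_of_countable (f := fun q : H × X => c q.2)
      (fun a => (hcm a).comp measurable_snd) hev) fun _ => hC _ _
  rw [integral_integral_swap hint]
  exact integral_congr_ae <| ae_of_all _ fun x => integral_apply_eq_sum_gibbsPolicy hev Q x (c x)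

theorem measure_compl_abs_empiricalMean_sub_policyRisk_le {n : ℕ} (hn : n ≠ 0) {ν : Measure X}
    [IsProbabilityMeasure ν] {P : Measure H} [IsProbabilityMeasure P] {ev : H → X → A}
    (hev : Measurable fun q : H × X => ev q.1 q.2) {c : X → A → ℝ}
    (hcm : ∀ a, Measurable fun x => c x a) (hc : ∀ x a, c x a ∈ Set.Icc (-1) 0)
    {β : ℝ} (hβ : 0 < β) :
    (Measure.pi fun _ : Fin n => ν) {ω | ∀ Q, IsPosterior P Q →
      |empiricalMean (fun x => ∑ a, gibbsPolicy ev Q x a * c x a) ω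
          - policyRisk ν c (gibbsPolicy ev Q)|
        ≤ √(((klDiv Q P).toReal + log (2 * √n / β)) / (2 * n))}ᶜ ≤ ENNReal.ofReal β := by
  have hℓ : Measurable fun q : H × X => c q.2 (ev q.1 q.2) :=
    measurable_apply_of_countable (f := fun q : H × X => c q.2)
      (fun a => (hcm a).comp measurable_snd) hev
  have hc1 (x a) : |c x a| ≤ 1 := abs_le_one_of_mem_Icc_neg_one_zero (hc x a)
  refine (measure_mono (Set.compl_subset_compl.2 fun ω hω Q hQ => ?_)).trans <|
    measure_compl_pacBayes_abs_deviation_le (P := P) (μ := ν) (a := -1) hn hℓ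
      (fun h x => by simpa only [neg_add_cancel] using hc x (ev h x)) hβ
  have := hQ.isProbabilityMeasure
  have hcost (x) : Integrable (fun h => c x (ev h x)) Q :=
    integrable_of_abs_le (hℓ.comp measurable_prodMk_right) fun h => hc1 x _
  have hsample : Integrable (fun h => empiricalMean (fun x => c x (ev h x)) ω) Q :=
    (integrable_finsetSum _ fun i _ => hcost (ω i)).const_mul _
  have hmean : Integrable (fun h => ∫ x, c x (ev h x) ∂ν) Q :=
    (integrable_of_abs_le (μ := Q.prod ν) hℓ fun _ => hc1 _ _).integral_prod_left
  have hdev := hω Q hQ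
  rw [integral_sub hsample hmean, integral_integral_eq_policyRisk hev hcm hc1] at hdev
  unfold empiricalMean at hdev ⊢
  simpa only [integral_const_mul, integral_finsetSum _ fun i _ => hcost (ω i),
    integral_apply_eq_sum_gibbsPolicy hev] using hdev

end StochasticPolicies

section OracleInequality

variable {X A H : Type*} [MeasurableSpace X] [MeasurableSpace A] [MeasurableSpace H] [Fintype A]

/-- The estimator `R̂_n^α` of the risk of the policy `q`. -/
noncomputable def ipsRisk {n : ℕ} (κ : Kernel X A) (c q : X → A → ℝ) (α : ℝ)
    (ω : Fin n → X × A) : ℝ :=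
  empiricalMean (fun z => ipsCost (propensity κ z.1) (c z.1) (q z.1) α z.2) ω

/-- The bound `B_n^α` on the bias caused by smoothing the importance weights. -/
noncomputable def ipsBias {n : ℕ} (κ : Kernel X A) (q : X → A → ℝ) (α : ℝ)
    (ω : Fin n → X × A) : ℝ :=
  1 - empiricalMean (fun z => ∑ a, q z.1 a * propensity κ z.1 a ^ (1 - α)) ω

/-- The empirical variance proxy `V̄_n^α`. -/
noncomputable def ipsVariance {n : ℕ} (κ : Kernel X A) (c q : X → A → ℝ) (α : ℝ)
    (ω : Fin n → X × A) : ℝ :=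
  empiricalMean (fun z => ipsVarianceProxy (propensity κ z.1) (c z.1) (q z.1) α z.2) ω

/-- The PAC-Bayes bound on the distance from the risk of `gibbsPolicy ev Q` to its estimate
`ipsRisk`, for the prior `P` and the confidence level `1 - δ`. -/
noncomputable def pacBayesPenalty {n : ℕ} (κ : Kernel X A) (c : X → A → ℝ) (ev : H → X → A)
    (P : Measure H) (lam δ α : ℝ) (ω : Fin n → X × A) (Q : Measure H) : ℝ :=
  √(((klDiv Q P).toReal + log (4 * √n / δ)) / (2 * n)) + ipsBias κ (gibbsPolicy ev Q) α ω
    + ((klDiv Q P).toReal + log (4 / δ)) / (n * lam)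
    + lam / 2 * ipsVariance κ c (gibbsPolicy ev Q) α ω

lemma two_mul_pacBayesPenalty {n : ℕ} (κ : Kernel X A) (c : X → A → ℝ) (ev : H → X → A)
    (P : Measure H) (lam δ α : ℝ) (ω : Fin n → X × A) (Q : Measure H) :
    2 * pacBayesPenalty κ c ev P lam δ α ω Q
      = 2 * √(((klDiv Q P).toReal + log (4 * √n / δ)) / (2 * n))
        + 2 * ipsBias κ (gibbsPolicy ev Q) α ω
        + 2 * ((klDiv Q P).toReal + log (4 / δ)) / (n * lam)
        + lam * ipsVariance κ c (gibbsPolicy ev Q) α ω := by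
  rw [pacBayesPenalty]
  ring

lemma sum_ipsExponent {n : ℕ} (hn : n ≠ 0) (κ : Kernel X A) (c q : X → A → ℝ) (α s : ℝ)
    (ω : Fin n → X × A) :
    ∑ i, ipsExponent (propensity κ (ω i).1) (c (ω i).1) (q (ω i).1) α s (ω i).2
      = n * (s * (ipsRisk κ c q α ω
            - empiricalMean (fun z => ipsMean (propensity κ z.1) (c z.1) (q z.1) α) ω)
          - s ^ 2 / 2 * ipsVariance κ c q α ω) := by
  rw [← natCast_mul_empiricalMean hn fun z : X × A =>
    ipsExponent (propensity κ z.1) (c z.1) (q z.1) α s z.2]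
  simp only [ipsExponent, ipsRisk, ipsVariance, empiricalMean_sub, empiricalMean_const_mul]

lemma abs_empiricalMean_ipsMean_sub_le {n : ℕ} (hn : n ≠ 0) (κ : Kernel X A) [IsMarkovKernel κ]
    {c q : X → A → ℝ} {α : ℝ} (hα : α ≤ 1) (hc : ∀ x a, c x a ∈ Set.Icc (-1) 0)
    (hq : ∀ x a, 0 ≤ q x a) (hq1 : ∀ x, ∑ a, q x a = 1) (ω : Fin n → X × A) :
    |empiricalMean (fun z => ipsMean (propensity κ z.1) (c z.1) (q z.1) α) ω
        - empiricalMean (fun z => ∑ a, q z.1 a * c z.1 a) ω| ≤ ipsBias κ q α ω := by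
  have hbias (z : X × A) := abs_ipsMean_sub_le (p := propensity κ z.1) hα
    (fun a => ⟨measureReal_nonneg, measureReal_le_one⟩) (hc z.1) (hq z.1) (hq1 z.1)
  have h := abs_empiricalMean_le
    (f := fun z => ipsMean (propensity κ z.1) (c z.1) (q z.1) α - ∑ a, q z.1 a * c z.1 a)
    (g := fun z => 1 - ∑ a, q z.1 a * propensity κ z.1 a ^ (1 - α)) hbias ω
  rwa [empiricalMean_sub, empiricalMean_sub, empiricalMean_const hn] at h

variable [MeasurableSingletonClass A]

lemma measurable_ipsExponent (κ : Kernel X A) {c q : X → A → ℝ}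
    (hc : ∀ a, Measurable fun x => c x a) (hq : ∀ a, Measurable fun x => q x a) (α s : ℝ) (a : A) :
    Measurable fun x => ipsExponent (propensity κ x) (c x) (q x) α s a := by
  have := measurable_propensity κ
  unfold ipsExponent ipsCost ipsMean ipsVarianceProxy
  fun_prop

lemma lintegral_compProd_exp_ipsExponent_le_one {ν : Measure X} [IsProbabilityMeasure ν]
    {κ : Kernel X A} [IsMarkovKernel κ] (hκ : ∀ x a, 0 < propensity κ x a) {c q : X → A → ℝ}
    (hcm : ∀ a, Measurable fun x => c x a) (hc : ∀ x a, |c x a| ≤ 1)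
    (hqm : ∀ a, Measurable fun x => q x a) (hq : ∀ x a, q x a ∈ Set.Icc 0 1) (α s : ℝ) :
    ∫⁻ z, ENNReal.ofReal (exp (ipsExponent (propensity κ z.1) (c z.1) (q z.1) α s z.2))
      ∂(ν ⊗ₘ κ) ≤ 1 := by
  have hm : Measurable fun z : X × A =>
      ipsExponent (propensity κ z.1) (c z.1) (q z.1) α s z.2 :=
    measurable_from_prod_countable_left (measurable_ipsExponent κ hcm hqm α s)
  rw [Measure.lintegral_compProd (by fun_prop)]
  calc _ ≤ ∫⁻ _, 1 ∂ν :=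
        lintegral_mono fun x => lintegral_exp_ipsExponent_le_one (hκ x) (hc x) (hq x) α s
    _ = 1 := by rw [lintegral_one, measure_univ]

theorem measure_compl_pacBayes_sum_ipsExponent_le {n : ℕ} {ν : Measure X} [IsProbabilityMeasure ν]
    {κ : Kernel X A} [IsMarkovKernel κ] (hκ : ∀ x a, 0 < propensity κ x a) {c : X → A → ℝ}
    (hcm : ∀ a, Measurable fun x => c x a) (hc : ∀ x a, |c x a| ≤ 1) {ev : H → X → A}
    (hev : Measurable fun q : H × X => ev q.1 q.2) {P : Measure H} [IsProbabilityMeasure P]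
    (α s : ℝ) {β : ℝ} (hβ : 0 < β) :
    (Measure.pi fun _ : Fin n => ν ⊗ₘ κ) {ω | ∀ Q, IsPosterior P Q →
      ∑ i, ipsExponent (propensity κ (ω i).1) (c (ω i).1) (gibbsPolicy ev Q (ω i).1) α s (ω i).2
        ≤ (klDiv Q P).toReal + log (1 / β)}ᶜ ≤ ENNReal.ofReal β := by
  classical
  let single (b a : A) : ℝ := if b = a then 1 else 0
  let g (b : A) (z : X × A) : ℝ := ipsExponent (propensity κ z.1) (c z.1) (single b) α s z.2
  have hg (b) : Measurable (g b) := measurable_from_prod_countable_left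
    (measurable_ipsExponent κ hcm (q := fun _ => single b) (fun _ => measurable_const) α s)
  have hgev : Measurable fun q : H × (X × A) => g (ev q.1 q.2.1) q.2 :=
    measurable_apply_of_countable (f := fun q : H × (X × A) => fun b => g b q.2)
      (fun b => (hg b).comp measurable_snd) (hev.comp (f := fun q : H × (X × A) => (q.1, q.2.1))
        (by fun_prop))
  have hbdd (z) : ∃ C, ∀ h, |g (ev h z.1) z| ≤ C :=
    have ⟨C, hC⟩ := Set.finite_range (fun b => |g b z|) |>.bddAbove
    ⟨C, fun h => hC ⟨ev h z.1, rfl⟩⟩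
  have hexp (h) : ∫⁻ z, ENNReal.ofReal (exp (g (ev h z.1) z)) ∂(ν ⊗ₘ κ) ≤ 1 :=
    lintegral_compProd_exp_ipsExponent_le_one hκ hcm hc (q := fun x => single (ev h x))
      (fun a => (Measurable.of_discrete (f := fun b => single b a)).comp
        (hev.comp measurable_prodMk_left))
      (fun x a => by unfold single; split_ifs <;> simp) α s
  refine (measure_mono (Set.compl_subset_compl.2 fun ω hω Q hQ => ?_)).trans <|
    measure_compl_pacBayes_sum_le (P := P) hgev hbdd hexp hβ
  have := hQ.isProbabilityMeasure
  refine (Finset.sum_congr rfl fun i _ => ?_).trans_le (hω Q hQ)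
  exact (integral_linearMap_single_eq_gibbsPolicy
    ((isLinearMap_ipsExponent (propensity κ (ω i).1) (c (ω i).1) α s (ω i).2).mk' _)
    hev Q (ω i).1).symm

lemma abs_le_div_add_of_forall_mul_sub_le {n lam D V K : ℝ} (hn : 0 < n) (hlam : 0 < lam)
    (hpos : n * (lam * D - lam ^ 2 / 2 * V) ≤ K)
    (hneg : n * (-lam * D - (-lam) ^ 2 / 2 * V) ≤ K) :
    |D| ≤ K / (n * lam) + lam / 2 * V := by
  have hnl : 0 < n * lam := mul_pos hn hlam
  rw [← sub_le_iff_le_add, le_div_iff₀ hnl]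
  rcases abs_cases D with ⟨h, -⟩ | ⟨h, -⟩ <;> rw [h] <;> linarith

theorem measure_compl_abs_ipsRisk_sub_le {n : ℕ} (hn : n ≠ 0) {ν : Measure X}
    [IsProbabilityMeasure ν] {κ : Kernel X A} [IsMarkovKernel κ]
    (hκ : ∀ x a, 0 < propensity κ x a) {c : X → A → ℝ} (hcm : ∀ a, Measurable fun x => c x a)
    (hc : ∀ x a, |c x a| ≤ 1) {ev : H → X → A} (hev : Measurable fun q : H × X => ev q.1 q.2)
    {P : Measure H} [IsProbabilityMeasure P] {lam : ℝ} (hlam : 0 < lam) (α : ℝ) {β : ℝ}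
    (hβ : 0 < β) :
    (Measure.pi fun _ : Fin n => ν ⊗ₘ κ) {ω | ∀ Q, IsPosterior P Q →
      |ipsRisk κ c (gibbsPolicy ev Q) α ω
          - empiricalMean
              (fun z => ipsMean (propensity κ z.1) (c z.1) (gibbsPolicy ev Q z.1) α) ω|
        ≤ ((klDiv Q P).toReal + log (2 / β)) / (n * lam)
          + lam / 2 * ipsVariance κ c (gibbsPolicy ev Q) α ω}ᶜ ≤ ENNReal.ofReal β := by
  have hevent (s : ℝ) := measure_compl_pacBayes_sum_ipsExponent_le (n := n) (ν := ν) (P := P)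
    hκ hcm hc hev α s (half_pos hβ)
  have hboth := measure_compl_inter_le_ofReal_add (half_pos hβ).le (half_pos hβ).le
    (hevent lam) (hevent (-lam))
  rw [add_halves, one_div_div] at hboth
  refine (measure_mono (Set.compl_subset_compl.2 fun ω ⟨hpos, hneg⟩ Q hQ => ?_)).trans hboth
  have hpos := hpos Q hQ
  have hneg := hneg Q hQ
  rw [sum_ipsExponent hn] at hpos hneg
  exact abs_le_div_add_of_forall_mul_sub_le (by positivity) hlam hpos hneg

theorem measure_compl_abs_empiricalMean_fst_sub_policyRisk_le {n : ℕ} (hn : n ≠ 0)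
    {ν : Measure X} [IsProbabilityMeasure ν] (κ : Kernel X A) [IsMarkovKernel κ]
    {c : X → A → ℝ} (hcm : ∀ a, Measurable fun x => c x a)
    (hc : ∀ x a, c x a ∈ Set.Icc (-1) 0) {ev : H → X → A}
    (hev : Measurable fun q : H × X => ev q.1 q.2) {P : Measure H} [IsProbabilityMeasure P]
    {β : ℝ} (hβ : 0 < β) :
    (Measure.pi fun _ : Fin n => ν ⊗ₘ κ) {ω | ∀ Q, IsPosterior P Q →
      |empiricalMean (fun z => ∑ a, gibbsPolicy ev Q z.1 a * c z.1 a) ω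
          - policyRisk ν c (gibbsPolicy ev Q)|
        ≤ √(((klDiv Q P).toReal + log (2 * √n / β)) / (2 * n))}ᶜ ≤ ENNReal.ofReal β := by
  refine (measure_mono (Set.compl_subset_compl.2 fun ω hω Q hQ => ?_)).trans <|
    measure_compl_abs_empiricalMean_sub_policyRisk_le (P := P) (ν := ν ⊗ₘ κ) hn
      (ev := fun h z => ev h z.1)
      (hev.comp (f := fun q : H × (X × A) => (q.1, q.2.1)) (by fun_prop)) (c := fun z => c z.1)
      (fun a => (hcm a).comp measurable_fst) (fun z => hc z.1) hβ
  have := hQ.isProbabilityMeasure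
  rw [← policyRisk_compProd_fst ν κ hcm (measurable_gibbsPolicy hev Q)]
  exact hω Q hQ

theorem measure_compl_abs_policyRisk_sub_ipsRisk_le {n : ℕ} (hn : n ≠ 0) {ν : Measure X}
    [IsProbabilityMeasure ν] {κ : Kernel X A} [IsMarkovKernel κ]
    (hκ : ∀ x a, 0 < propensity κ x a) {c : X → A → ℝ} (hcm : ∀ a, Measurable fun x => c x a)
    (hc : ∀ x a, c x a ∈ Set.Icc (-1) 0) {ev : H → X → A}
    (hev : Measurable fun q : H × X => ev q.1 q.2) {P : Measure H} [IsProbabilityMeasure P]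
    {lam : ℝ} (hlam : 0 < lam) {α : ℝ} (hα : α ≤ 1) {δ : ℝ} (hδ : 0 < δ) :
    (Measure.pi fun _ : Fin n => ν ⊗ₘ κ) {ω | ∀ Q, IsPosterior P Q →
      |policyRisk ν c (gibbsPolicy ev Q) - ipsRisk κ c (gibbsPolicy ev Q) α ω|
        ≤ pacBayesPenalty κ c ev P lam δ α ω Q}ᶜ ≤ ENNReal.ofReal δ := by
  have hc1 (x a) : |c x a| ≤ 1 := abs_le_one_of_mem_Icc_neg_one_zero (hc x a)
  have hboth := measure_compl_inter_le_ofReal_add (half_pos hδ).le (half_pos hδ).le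
    (measure_compl_abs_empiricalMean_fst_sub_policyRisk_le (P := P) (ν := ν) hn κ hcm hc hev
      (half_pos hδ))
    (measure_compl_abs_ipsRisk_sub_le (P := P) (ν := ν) hn hκ hcm hc1 hev hlam α (half_pos hδ))
  rw [add_halves, show 2 * √n / (δ / 2) = 4 * √n / δ by ring,
    show 2 / (δ / 2) = 4 / δ by ring] at hboth
  refine (measure_mono (Set.compl_subset_compl.2 fun ω ⟨hcontext, hips⟩ Q hQ => ?_)).trans hboth
  have := hQ.isProbabilityMeasure
  have hbias := abs_empiricalMean_ipsMean_sub_le hn κ hα hc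
    (fun x a => (gibbsPolicy_mem_Icc ev Q x a).1) (sum_gibbsPolicy hev Q) ω
  have hcontext := hcontext Q hQ
  have hips := hips Q hQ
  rw [abs_sub_comm] at hcontext hbias hips
  refine (abs_sub_le _ _ _).trans <| (add_le_add
    ((abs_sub_le _ _ _).trans (add_le_add hcontext hbias)) hips).trans_eq ?_
  simp only [pacBayesPenalty, add_assoc]

theorem pac_bayes_oracle_inequality_general {n : ℕ} (hn : n ≠ 0) {ν : Measure X}
    [IsProbabilityMeasure ν] {κ : Kernel X A} [IsMarkovKernel κ]
    (hκ : ∀ x a, 0 < propensity κ x a) {c : X → A → ℝ} (hcm : ∀ a, Measurable fun x => c x a)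
    (hc : ∀ x a, c x a ∈ Set.Icc (-1) 0) {ev : H → X → A}
    (hev : Measurable fun q : H × X => ev q.1 q.2) {P : Measure H} [IsProbabilityMeasure P]
    {lam : ℝ} (hlam : 0 < lam) {α : ℝ} (hα : α ≤ 1) {δ : ℝ} (hδ : 0 < δ)
    {Qhat : (Fin n → X × A) → Measure H} (hQhat : ∀ ω, IsPosterior P (Qhat ω))
    (hmin : ∀ ω Q, IsPosterior P Q →
      ipsRisk κ c (gibbsPolicy ev (Qhat ω)) α ω + pacBayesPenalty κ c ev P lam δ α ω (Qhat ω)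
        ≤ ipsRisk κ c (gibbsPolicy ev Q) α ω + pacBayesPenalty κ c ev P lam δ α ω Q) :
    ENNReal.ofReal (1 - δ) ≤ (Measure.pi fun _ : Fin n => ν ⊗ₘ κ) {ω | ∀ Q, IsPosterior P Q →
      policyRisk ν c (gibbsPolicy ev (Qhat ω))
        ≤ policyRisk ν c (gibbsPolicy ev Q) + 2 * pacBayesPenalty κ c ev P lam δ α ω Q} := by
  refine ofReal_one_sub_le_of_measure_compl_le hδ.le <|
    (measure_mono (Set.compl_subset_compl.2 fun ω hω Q hQ => ?_)).trans <|
      measure_compl_abs_policyRisk_sub_ipsRisk_le (P := P) (ν := ν) hn hκ hcm hc hev hlam hα hδ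
  calc policyRisk ν c (gibbsPolicy ev (Qhat ω))
      ≤ ipsRisk κ c (gibbsPolicy ev (Qhat ω)) α ω
          + pacBayesPenalty κ c ev P lam δ α ω (Qhat ω) := by
        linarith [(abs_le.1 (hω _ (hQhat ω))).2]
    _ ≤ ipsRisk κ c (gibbsPolicy ev Q) α ω + pacBayesPenalty κ c ev P lam δ α ω Q := hmin ω Q hQ
    _ ≤ _ := by linarith [(abs_le.1 (hω Q hQ)).1]

end OracleInequality

/-- **Oracle inequality.**  Let `F` be the bound-based objective (empirical IPS-α risk plus
the PAC-Bayes bound terms), let `Qhat ω` minimize `F ω ·` over all posteriors with finite KL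
divergence to the prior, and let `Qstar` minimize the true risk over all posteriors.  Then
with probability at least `1 − δ` over the logged data, the risk of the learned policy is
within twice the bound terms (evaluated at `Qstar`) of the optimal risk. -/
theorem pac_bayes_oracle_inequality
    {X : Type*} [MeasurableSpace X] {K : ℕ}
    {H : Type*} [MeasurableSpace H]
    (ν : Measure X) [IsProbabilityMeasure ν]
    (p0 c : X → Fin K → ℝ)
    (hp0meas : ∀ a, Measurable fun x => p0 x a)
    (hcmeas : ∀ a, Measurable fun x => c x a)
    (hp0pos : ∀ x a, 0 < p0 x a) (hp0sum : ∀ x, ∑ a, p0 x a = 1)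
    (hc : ∀ x a, c x a ∈ Set.Icc (-1 : ℝ) 0)
    (ev : H → X → Fin K)
    (hev : Measurable fun q : H × X => ev q.1 q.2)
    (κ0 : Kernel X (Fin K)) [IsMarkovKernel κ0]
    (hκ0 : ∀ x a, κ0 x {a} = ENNReal.ofReal (p0 x a))
    (P : Measure H) [IsProbabilityMeasure P]
    (lam : ℝ) (hlam : 0 < lam) (n : ℕ) (hn : 1 ≤ n)
    (δ : ℝ) (hδ : δ ∈ Set.Ioo (0 : ℝ) 1) (α : ℝ) (hα : α ∈ Set.Icc (0 : ℝ) 1)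
    (Rk : Measure H → ℝ)
    (hRk : ∀ Q : Measure H, Rk Q = ∫ x, ∑ a, (Q {h | ev h x = a}).toReal * c x a ∂ν)
    (F : (Fin n → X × Fin K) → Measure H → ℝ)
    (hF : ∀ ω (Q : Measure H), F ω Q =
      (n : ℝ)⁻¹ * (∑ i, c (ω i).1 (ω i).2 * (Q {h | ev h (ω i).1 = (ω i).2}).toReal
          / p0 (ω i).1 (ω i).2 ^ α)
        + Real.sqrt (((klDiv Q P).toReal + Real.log (4 * Real.sqrt n / δ)) / (2 * n))
        + (1 - (n : ℝ)⁻¹ * ∑ i, ∑ a,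
            (Q {h | ev h (ω i).1 = a}).toReal * p0 (ω i).1 a ^ (1 - α))
        + ((klDiv Q P).toReal + Real.log (4 / δ)) / (n * lam)
        + lam / 2 * ((n : ℝ)⁻¹ * ∑ i,
            ((∑ a, p0 (ω i).1 a *
                ((Q {h | ev h (ω i).1 = a}).toReal / p0 (ω i).1 a ^ (2 * α)))
              + (Q {h | ev h (ω i).1 = (ω i).2}).toReal * c (ω i).1 (ω i).2 ^ 2
                  / p0 (ω i).1 (ω i).2 ^ (2 * α))))
    (Qhat : (Fin n → X × Fin K) → Measure H)
    (hQhatProb : ∀ ω, IsProbabilityMeasure (Qhat ω))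
    (hQhatKL : ∀ ω, klDiv (Qhat ω) P ≠ ⊤)
    (hQhatMin : ∀ ω (Q' : Measure H), IsProbabilityMeasure Q' → klDiv Q' P ≠ ⊤ →
      F ω (Qhat ω) ≤ F ω Q')
    (Qstar : Measure H) [IsProbabilityMeasure Qstar] (hQstarKL : klDiv Qstar P ≠ ⊤)
    (hQstarMin : ∀ Q' : Measure H, IsProbabilityMeasure Q' → Rk Qstar ≤ Rk Q') :
    ENNReal.ofReal (1 - δ) ≤
      (Measure.pi fun _ : Fin n => ν ⊗ₘ κ0)
        {ω | Rk (Qhat ω) ≤ Rk Qstar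
          + 2 * Real.sqrt (((klDiv Qstar P).toReal + Real.log (4 * Real.sqrt n / δ)) / (2 * n))
          + 2 * (1 - (n : ℝ)⁻¹ * ∑ i, ∑ a,
              (Qstar {h | ev h (ω i).1 = a}).toReal * p0 (ω i).1 a ^ (1 - α))
          + 2 * ((klDiv Qstar P).toReal + Real.log (4 / δ)) / (n * lam)
          + lam * ((n : ℝ)⁻¹ * ∑ i,
              ((∑ a, p0 (ω i).1 a *
                  ((Qstar {h | ev h (ω i).1 = a}).toReal / p0 (ω i).1 a ^ (2 * α)))
                + (Qstar {h | ev h (ω i).1 = (ω i).2}).toReal * c (ω i).1 (ω i).2 ^ 2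
                    / p0 (ω i).1 (ω i).2 ^ (2 * α)))} := by
  obtain rfl : p0 = propensity κ0 := funext₂ fun x a => by
    rw [propensity, measureReal_def, hκ0, ENNReal.toReal_ofReal (hp0pos x a).le]
  obtain rfl : Rk = fun Q => policyRisk ν c (gibbsPolicy ev Q) := funext hRk
  have hF (ω) (Q : Measure H) : F ω Q = ipsRisk κ0 c (gibbsPolicy ev Q) α ω
      + pacBayesPenalty κ0 c ev P lam δ α ω Q :=
    (hF ω Q).trans (by simp only [pacBayesPenalty, ← add_assoc]; rfl)
  simp only [hF] at hQhatMin
  refine (pac_bayes_oracle_inequality_general (ν := ν) (P := P) (by omega) hp0pos hcmeas hc hev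
    hlam hα.2 hδ.1 (fun ω => ⟨hQhatProb ω, hQhatKL ω⟩)
    fun ω Q hQ => hQhatMin ω Q hQ.1 hQ.2).trans
    (measure_mono fun ω hω => (hω Qstar ⟨inferInstance, hQstarKL⟩).trans_eq ?_)
  simp only [two_mul_pacBayesPenalty, ← add_assoc]
  rfl
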